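/- arXiv:1607.05889 — 3 statements merged into one kernel-verified Lean document; each statement's English description precedes it below -/
import Mathlib

section
/- For every multiplicative character D of F_q with D ∉ {ε, A₄, A̅₄} and every j ∈ F_q*, h(D,j) = ( G(D)²·G(φ) / G(D²φ) ) · ₂F₁(D, DA₄; A₄ | j⁴). -/
/-!
Write `φ = A₄²`, let `s = (j + j⁻¹) / 2`, and put `L(A, B; c, x) = ∑ₜ A(t² - c) B(xt - 1)`.

The Cayley substitution `t = (1 + x) / (1 - x)` turns `h(D, j)` into a multiple of
`L(D, D̄²φ; 1, s)`. On the other side, `y = z / j²` turns the sum defining the hypergeometric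
function into a multiple of `∑ A₄(z) D̄(j² + j⁻² - (z + z⁻¹))`. Since `A₄(z⁻¹) = φ(z) A₄(z)`, only
the squares `z = w²` survive in this sum, and `v = w + w⁻¹` turns what is left into a multiple of
`L(D̄, φ; s², 1)`.

The two sums `L` are proportional, a finite field version of the symmetry `P_ν = P_{-ν-1}` of
Legendre functions: expanding their linear factors in additive characters writes them as transforms
of the Bessel sums `∑ₜ D(t² - 1) ψ(rst)` and `∑ₜ D̄(t² - s²) ψ(rt)`, and these are twisted
Kloosterman sums, exchanged by `m ↦ (r/2)² / m`, which is the symmetry `K_ν = K_{-ν}`. The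
constants match by `G(D) G(D̄) = D(-1) q`.
-/

open Finset

noncomputable section

variable {F : Type} [Field F] [Fintype F] [DecidableEq F]

/-- Katz's mixed character sum `P(j,k)`; the quadratic character `φ` is `A₄ ^ 2`. -/
def Pkatz (ψ : AddChar F ℂ) (A₄ : MulChar F ℂ) (a : F) (j k : F) : ℂ :=
  (if j = k then 1 else 0) + (A₄ ^ 2) (-1) * (if j = -k then 1 else 0) +
    (gaussSum (A₄ ^ 2) ψ)⁻¹ *
      ∑ x ∈ univ.filter (fun x : F => x ≠ 0),
        (A₄ ^ 2) (a / x - x) * ψ (x * (j + k) ^ 2 + (a / x) * (j - k) ^ 2)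

/-- Katz's sums `V(j)`. -/
def Vkatz (ψ : AddChar F ℂ) (A₄ : MulChar F ℂ) (a : F) (τ : ℂ) (j : F) : ℂ :=
  if j = 0 then gaussSum A₄ ψ / τ + τ / gaussSum A₄ ψ
  else τ⁻¹ * ∑ x ∈ univ.filter (fun x : F => x ≠ 0), A₄ x * ψ (x + a * j ^ 4 / x)

/-- The finite field hypergeometric function `₂F₁(A,B;C|x)`. -/
def hyp2F1 (A B C : MulChar F ℂ) (x : F) : ℂ :=
  ((1 : MulChar F ℂ) x / (Fintype.card F : ℂ)) *
    ∑ y : F, B y * (B⁻¹ * C) (y - 1) * A⁻¹ (1 - x * y)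

/-- The Jacobi sum `J(A,B)`. -/
def Jsum (A B : MulChar F ℂ) : ℂ := ∑ y : F, A y * B (1 - y)

/-- The sum `h(D,j)`; the quadratic character `φ` is `A₄ ^ 2`. -/
def hKatz (A₄ D : MulChar F ℂ) (j : F) : ℂ :=
  ∑ x ∈ univ.filter (fun x : F => x ≠ 0),
    D x * (A₄ ^ 2) (1 - x) * ((D⁻¹ ^ 2) * A₄ ^ 2) (x * (j + 1) ^ 2 + (j - 1) ^ 2)

/-- The sum `H(λ₁)`; the quadratic character `φ` is `A₄ ^ 2`. -/
def Hkatz (A₄ lam : MulChar F ℂ) (a : F) : ℂ :=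
  ∑ p ∈ (univ ×ˢ univ).filter
      (fun p : F × F => p.1 ≠ 0 ∧ p.2 ≠ 0 ∧
        p.2 * (p.1 + 1) ^ 2 + a * (p.1 - 1) ^ 2 / p.2 = 0),
    (lam ^ 2 * A₄ ^ 2) p.1 * (A₄ ^ 2) (p.2 - a / p.2)

/-- The Mellin transform `S(χ)` of the sums `V(j)`. -/
def Smel (ψ : AddChar F ℂ) (A₄ : MulChar F ℂ) (a : F) (τ : ℂ) (χ : MulChar F ℂ) : ℂ :=
  ∑ j ∈ univ.filter (fun j : F => j ≠ 0), χ j * Vkatz ψ A₄ a τ j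

/-- The Mellin transform `T(χ)` of the sums `P(j,0)`. -/
def Tmel (ψ : AddChar F ℂ) (A₄ : MulChar F ℂ) (a : F) (χ : MulChar F ℂ) : ℂ :=
  ∑ j ∈ univ.filter (fun j : F => j ≠ 0), χ j * Pkatz ψ A₄ a j 0

/-- The double Mellin transform `T(χ₁,χ₂)` of the sums `P(j,k)`. -/
def Tmel2 (ψ : AddChar F ℂ) (A₄ : MulChar F ℂ) (a : F) (χ₁ χ₂ : MulChar F ℂ) : ℂ :=
  ∑ j ∈ univ.filter (fun j : F => j ≠ 0), ∑ k ∈ univ.filter (fun k : F => k ≠ 0),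
    χ₁ j * χ₂ k * Pkatz ψ A₄ a j k

end

section QuadraticCharacter

variable {F R : Type*} [Field F] [CommRing R] {φ : MulChar F R}

lemma apply_sq_of_isQuadratic (hφ : φ.IsQuadratic) {x : F} (hx : x ≠ 0) : φ (x ^ 2) = 1 := by
  rw [map_pow, ← MulChar.pow_apply' φ two_ne_zero, hφ.sq_eq_one, MulChar.one_apply hx.isUnit]

lemma apply_div_of_isQuadratic (hφ : φ.IsQuadratic) (x y : F) : φ (x / y) = φ (x * y) := by
  rw [div_eq_mul_inv, map_mul, ← MulChar.inv_apply', hφ.inv, map_mul]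

lemma inv_sq_mul_apply_of_isQuadratic (hφ : φ.IsQuadratic) (D : MulChar F R) (y : F) :
    (D ^ 2 * φ)⁻¹ y = D⁻¹ (y ^ 2) * φ y := by
  rw [mul_inv, hφ.inv, MulChar.mul_apply, ← inv_pow, MulChar.pow_apply' _ two_ne_zero, map_pow]

lemma apply_sq_mul_mul_inv_apply_of_isQuadratic (hφ : φ.IsQuadratic) {D : MulChar F R} {u : F}
    (hu : u ≠ 0) (x y : F) :
    D (u ^ 2 * x) * φ u * (D ^ 2 * φ)⁻¹ (u * y) = D x * (D ^ 2 * φ)⁻¹ y := by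
  have hDu : D (u ^ 2) * D⁻¹ (u ^ 2) = 1 := by
    rw [← MulChar.mul_apply, mul_inv_cancel, MulChar.one_apply (pow_ne_zero 2 hu).isUnit]
  have hφu : φ u * φ u = 1 := by rw [← map_mul, ← sq, apply_sq_of_isQuadratic hφ hu]
  rw [map_mul, map_mul, inv_sq_mul_apply_of_isQuadratic hφ D u]
  linear_combination D x * (D ^ 2 * φ)⁻¹ y * (φ u * φ u * hDu + hφu)

lemma two_ne_zero_of_isQuadratic (hφ : φ.IsQuadratic) (hφ₁ : φ ≠ 1) : (2 : R) ≠ 0 := by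
  intro h2
  have hneg : (-1 : R) = 1 := by linear_combination -h2
  obtain ⟨a, ha⟩ := MulChar.ne_one_iff.mp hφ₁
  have : Nontrivial R := ⟨_, _, ha⟩
  rcases hφ a with h | h | h
  · exact MulChar.apply_ne_zero_iff.mpr a.isUnit h
  · exact ha h
  · exact ha (h.trans hneg)

lemma ringChar_ne_two_of_isQuadratic [Finite F] (hφ : φ.IsQuadratic) (hφ₁ : φ ≠ 1) :
    ringChar F ≠ 2 := by
  refine fun hchar ↦ hφ₁ (MulChar.ext fun a ↦ ?_)
  obtain ⟨b, hb⟩ := FiniteField.isSquare_of_char_two hchar (a : F)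
  have hb0 : b ≠ 0 := by rintro rfl; simp at hb
  rw [hb, ← sq, apply_sq_of_isQuadratic hφ hb0, MulChar.one_apply (pow_ne_zero 2 hb0).isUnit]

lemma apply_generator_of_isQuadratic (hφ : φ.IsQuadratic) (hφ₁ : φ ≠ 1) {g : Fˣ}
    (hg : ∀ x, x ∈ Subgroup.zpowers g) : φ g = -1 := by
  have hne : φ g ≠ 1 := fun h ↦
    hφ₁ ((MulChar.eq_iff hg φ 1).mpr (h.trans (MulChar.one_apply_coe g).symm))
  have : Nontrivial R := ⟨_, _, hne⟩
  exact ((hφ g).resolve_left (MulChar.apply_ne_zero_iff.mpr g.isUnit)).resolve_left hne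

lemma eq_of_isQuadratic [Finite F] {χ : MulChar F R} (hχ : χ.IsQuadratic) (hχ₁ : χ ≠ 1)
    (hφ : φ.IsQuadratic) (hφ₁ : φ ≠ 1) : χ = φ := by
  obtain ⟨g, hg⟩ := IsCyclic.exists_generator (α := Fˣ)
  rw [MulChar.eq_iff hg, apply_generator_of_isQuadratic hχ hχ₁ hg,
    apply_generator_of_isQuadratic hφ hφ₁ hg]

lemma sq_mul_sq_ne_one [Finite F] [IsDomain R] {A D : MulChar F R} (hA : (A ^ 2).IsQuadratic)
    (hA₁ : A ^ 2 ≠ 1) (hD : D ≠ A) (hD' : D ≠ A⁻¹) : D ^ 2 * A ^ 2 ≠ 1 := by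
  intro h
  have hDA : (D * A).IsQuadratic := MulChar.isQuadratic_iff_sq_eq_one.mpr (by rw [mul_pow, h])
  have hDA₁ : D * A ≠ 1 := fun h ↦ hD' (eq_inv_of_mul_eq_one_left h)
  refine hD (mul_right_cancel (b := A) ?_)
  rw [eq_of_isQuadratic hDA hDA₁ hA hA₁, sq]

variable [Fintype F]

lemma eq_quadraticChar_of_isQuadratic [DecidableEq F] (hφ : φ.IsQuadratic) (hφ₁ : φ ≠ 1) :
    φ = (quadraticChar F).ringHomComp (Int.castRingHom R) := by
  obtain ⟨g, hg⟩ := IsCyclic.exists_generator (α := Fˣ)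
  have hchar := ringChar_ne_two_of_isQuadratic hφ hφ₁
  rw [MulChar.eq_iff hg, apply_generator_of_isQuadratic hφ hφ₁ hg, MulChar.ringHomComp_apply,
    apply_generator_of_isQuadratic (quadraticChar_isQuadratic F) (quadraticChar_ne_one hchar) hg]
  simp

lemma sum_comp_sq (hφ : φ.IsQuadratic) (hφ₁ : φ ≠ 1) (f : F → R) :
    ∑ w, f (w ^ 2) = ∑ v, (1 + φ v) * f v := by
  classical
  rw [← sum_fiberwise univ (fun w : F ↦ w ^ 2)]
  refine sum_congr rfl fun v _ ↦ ?_
  have hcard := quadraticChar_card_sqrts (ringChar_ne_two_of_isQuadratic hφ hφ₁) v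
  rw [Set.toFinset_ofPred] at hcard
  have hφv : φ v = (quadraticChar F v : R) := by
    rw [eq_quadraticChar_of_isQuadratic hφ hφ₁]; rfl
  calc ∑ w with w ^ 2 = v, f (w ^ 2) = ∑ w with w ^ 2 = v, f v :=
        sum_congr rfl fun w hw ↦ by rw [(mem_filter.mp hw).2]
    _ = ((#{w : F | w ^ 2 = v} : ℤ) : R) * f v := by simp
    _ = (1 + φ v) * f v := by rw [hcard, hφv, Int.cast_add, Int.cast_one, add_comm]

end QuadraticCharacter

section Substitutions

variable {F R : Type*} [Field F] [Fintype F]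

/- The Cayley transform permutes the projective line. The values at `x = 1` and `t = -1`, which
correspond to infinity, are the term `f 1` and, as division by zero gives zero, the term `f 0`. -/
lemma sum_eq_add_sum_cayley [AddCommMonoid R] (h2 : (2 : F) ≠ 0) (f : F → R) (hf : f 0 = 0) :
    ∑ x, f x = f 1 + ∑ t, f ((t - 1) / (t + 1)) := by
  classical
  rw [← add_sum_erase univ f (mem_univ 1), ← sum_erase univ (a := (-1 : F)) (by simp [hf])]
  congr 1
  have hden_t {t : F} (ht : t ≠ -1) : t + 1 ≠ 0 := fun h ↦ ht (eq_neg_of_add_eq_zero_left h)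
  have hden_x {x : F} (hx : x ≠ 1) : 1 - x ≠ 0 := sub_ne_zero.mpr hx.symm
  have hcayley {t : F} (ht : t ≠ -1) : 1 - (t - 1) / (t + 1) = 2 / (t + 1) := by
    have := hden_t ht
    field_simp
    ring
  have hcayley_symm {x : F} (hx : x ≠ 1) : (1 + x) / (1 - x) + 1 = 2 / (1 - x) := by
    have := hden_x hx
    field_simp
    ring
  refine sum_nbij' (fun x ↦ (1 + x) / (1 - x)) (fun t ↦ (t - 1) / (t + 1)) ?_ ?_ ?_ ?_ ?_
  all_goals simp only [mem_erase, mem_univ, and_true]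
  · intro x hx h
    have := hcayley_symm hx
    rw [h, neg_add_cancel] at this
    exact div_ne_zero h2 (hden_x hx) this.symm
  · intro t ht h
    have := hcayley ht
    rw [h, sub_self] at this
    exact div_ne_zero h2 (hden_t ht) this.symm
  · intro x hx
    have := hden_x hx
    rw [hcayley_symm hx]
    field_simp
    ring
  · intro t ht
    have := hden_t ht
    rw [hcayley ht]
    field_simp
    ring
  · intro x hx
    have := hden_x hx
    rw [hcayley_symm hx]
    congr 1
    field_simp
    ring

variable [CommRing R]

lemma sum_apply_sq_sub_one_mul {φ : MulChar F R} (hφ : φ.IsQuadratic) (hφ₁ : φ ≠ 1)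
    (f : F → R) :
    f 2 + ∑ t, φ (t ^ 2 - 1) * f (2 + 4 / (t ^ 2 - 1)) =
      ∑ v, (φ (v + 2) + φ (v - 2)) * f v := by
  classical
  have h2 : (2 : F) ≠ 0 := Ring.two_ne_zero (ringChar_ne_two_of_isQuadratic hφ hφ₁)
  have h4 : (4 : F) = 2 ^ 2 := by norm_num
  have hinv : Function.Involutive fun y : F ↦ 4 / y := fun y ↦
    div_div_cancel₀ (h4 ▸ pow_ne_zero 2 h2)
  -- The permutation `v ↦ 1 + 4 / (v - 2)` fits the junk value: it sends `2` to `1`.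
  let e : F ≃ F := (Equiv.subRight 2).trans (hinv.toPerm.trans (Equiv.addLeft 1))
  have he (v : F) : e v = 1 + 4 / (v - 2) := rfl
  rw [sum_comp_sq hφ hφ₁ fun x ↦ φ (x - 1) * f (2 + 4 / (x - 1)), ← Equiv.sum_comp e,
    ← add_sum_erase univ _ (mem_univ (2 : F)), ← add_sum_erase univ _ (mem_univ (2 : F))]
  have hφ4 : φ (2 + 2) = 1 := by
    rw [← two_mul, ← sq, apply_sq_of_isQuadratic hφ h2]
  simp only [he, sub_self, div_zero, add_zero, MulChar.map_zero, hφ4, zero_mul, mul_zero,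
    zero_add, one_mul]
  congr 1
  refine sum_congr rfl fun v hv ↦ ?_
  have hv2 : v - 2 ≠ 0 := sub_ne_zero.mpr (ne_of_mem_erase hv)
  have hv_add : φ (1 + 4 / (v - 2)) = φ (v + 2) * φ (v - 2) := by
    rw [← map_mul, ← apply_div_of_isQuadratic hφ]
    congr 1
    field_simp
    ring
  have hv_sub : φ (1 + 4 / (v - 2) - 1) = φ (v - 2) := by
    rw [add_sub_cancel_left, apply_div_of_isQuadratic hφ, map_mul, h4,
      apply_sq_of_isQuadratic hφ h2, one_mul]
  have hφsq : φ (v - 2) * φ (v - 2) = 1 := by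
    rw [← map_mul, ← sq, apply_sq_of_isQuadratic hφ hv2]
  have hinv_v : 4 / (4 / (v - 2)) = v - 2 := hinv _
  rw [hv_add, hv_sub, add_sub_cancel_left, hinv_v, add_sub_cancel]
  linear_combination φ (v + 2) * f v * hφsq

lemma sum_apply_mul_comp_add_inv {φ : MulChar F R} (hφ : φ.IsQuadratic) (hφ₁ : φ ≠ 1)
    (f : F → R) :
    ∑ w, φ w * f (w + w⁻¹) = ∑ v, (φ (v + 2) + φ (v - 2)) * f v := by
  have h2 : (2 : F) ≠ 0 := Ring.two_ne_zero (ringChar_ne_two_of_isQuadratic hφ hφ₁)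
  rw [sum_eq_add_sum_cayley h2 _ (by simp [MulChar.map_zero]), ← sum_apply_sq_sub_one_mul hφ hφ₁]
  congr 1
  · norm_num
  refine sum_congr rfl fun t _ ↦ ?_
  have hfactor : t ^ 2 - 1 = (t - 1) * (t + 1) := by ring
  rw [apply_div_of_isQuadratic hφ, ← hfactor]
  by_cases ht : t ^ 2 - 1 = 0
  · simp [ht, MulChar.map_zero]
  obtain ⟨hsub, hadd⟩ := mul_ne_zero_iff.mp (hfactor ▸ ht)
  congr 2
  rw [hfactor]
  field_simp
  ring

/- As `A z⁻¹ = A ^ 2 z * A z`, symmetrizing under `z ↦ z⁻¹` leaves only the squares `z`. -/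
lemma two_mul_sum_apply_mul_comp_add_inv {A : MulChar F R} (hA : (A ^ 2).IsQuadratic)
    (hA₁ : A ^ 2 ≠ 1) (f : F → R) :
    2 * ∑ z, A z * f (z + z⁻¹) = ∑ w, (A ^ 2) w * f ((w + w⁻¹) ^ 2 - 2) := by
  have hAinv : A⁻¹ = A ^ 2 * A := by
    rw [inv_eq_iff_mul_eq_one, ← mul_assoc, mul_comm A, mul_assoc, ← sq, ← sq, hA.sq_eq_one]
  have hflip : ∑ z, A z * f (z + z⁻¹) = ∑ z, (A ^ 2) z * (A z * f (z + z⁻¹)) := by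
    rw [← Equiv.sum_comp (Equiv.inv F)]
    refine sum_congr rfl fun z _ ↦ ?_
    rw [Equiv.inv_apply, inv_inv, ← MulChar.inv_apply', hAinv, MulChar.mul_apply, mul_assoc,
      add_comm z]
  calc 2 * ∑ z, A z * f (z + z⁻¹)
      = ∑ z, (1 + (A ^ 2) z) * (A z * f (z + z⁻¹)) := by
        simp only [one_add_mul, sum_add_distrib, ← hflip, two_mul]
    _ = ∑ w, A (w ^ 2) * f (w ^ 2 + (w ^ 2)⁻¹) := (sum_comp_sq hA hA₁ _).symm
    _ = ∑ w, (A ^ 2) w * f ((w + w⁻¹) ^ 2 - 2) := by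
        refine sum_congr rfl fun w _ ↦ ?_
        rw [map_pow, MulChar.pow_apply' A two_ne_zero]
        rcases eq_or_ne w 0 with rfl | hw
        · simp [MulChar.map_zero]
        congr 2
        field_simp
        ring

lemma sum_apply_mul_comp_add_inv_of_sq [IsDomain R] {A : MulChar F R}
    (hA : (A ^ 2).IsQuadratic) (hA₁ : A ^ 2 ≠ 1) (f : F → R) :
    ∑ z, A z * f (z + z⁻¹) = (A ^ 2) 2 * ∑ u, (A ^ 2) (u - 1) * f (4 * u ^ 2 - 2) := by
  have h2 : (2 : F) ≠ 0 := Ring.two_ne_zero (ringChar_ne_two_of_isQuadratic hA hA₁)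
  refine mul_left_cancel₀ (two_ne_zero_of_isQuadratic hA hA₁) ?_
  have heven (v : F) : (A ^ 2) (-v + 2) = (A ^ 2) (v - 2) := by
    simp only [MulChar.pow_apply' A two_ne_zero, ← map_pow]
    congr 1
    ring
  have hreflect :
      ∑ v, (A ^ 2) (v + 2) * f (v ^ 2 - 2) = ∑ v, (A ^ 2) (v - 2) * f (v ^ 2 - 2) := by
    rw [← Equiv.sum_comp (Equiv.neg F)]
    simp only [Equiv.neg_apply, heven, neg_sq]
  rw [two_mul_sum_apply_mul_comp_add_inv hA hA₁,
    sum_apply_mul_comp_add_inv hA hA₁ fun v ↦ f (v ^ 2 - 2)]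
  simp only [add_mul, sum_add_distrib, hreflect]
  rw [← two_mul, ← Equiv.sum_comp (Equiv.mulLeft₀ 2 h2), mul_sum univ _ ((A ^ 2) 2)]
  congr 1
  refine sum_congr rfl fun u _ ↦ ?_
  rw [Equiv.mulLeft₀_apply, ← mul_assoc, ← map_mul]
  ring_nf

end Substitutions

section CharacterSums

variable {F R : Type*} [Field F] [Fintype F] [CommRing R]

/-- The Kloosterman sum with parameters `a`, `b` twisted by `χ`; the meaningless term `m = 0`
vanishes because `χ 0 = 0`. -/
def kloostermanSum (χ : MulChar F R) (ψ : AddChar F R) (a b : F) : R :=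
  ∑ m, χ m * ψ (a * m + b / m)

/-- The analogue for finite fields of the integral `∫ (t² - c) ^ ν * exp (r * t)`, which represents
Bessel functions. -/
def besselSum (χ : MulChar F R) (ψ : AddChar F R) (c r : F) : R :=
  ∑ t, χ (t ^ 2 - c) * ψ (r * t)

/-- The analogue for finite fields of the integral `∫ (t² - c) ^ ν * (x * t - 1) ^ μ`, which
represents Legendre functions when `c = 1` and `μ = -ν - 1`. -/
def legendreSum (A B : MulChar F R) (c x : F) : R :=
  ∑ t, A (t ^ 2 - c) * B (x * t - 1)

lemma kloostermanSum_mul_right (χ : MulChar F R) (ψ : AddChar F R) (a b : F)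
    {c : F} (hc : c ≠ 0) :
    kloostermanSum χ ψ a (b * c) = χ c * kloostermanSum χ⁻¹ ψ b (a * c) := by
  have hinv : Function.Involutive fun m : F ↦ c / m := fun m ↦ div_div_cancel₀ hc
  rw [kloostermanSum, kloostermanSum, ← Equiv.sum_comp hinv.toPerm, mul_sum]
  refine sum_congr rfl fun m _ ↦ ?_
  rw [Function.Involutive.coe_toPerm]
  rcases eq_or_ne m 0 with rfl | hm
  · simp [MulChar.map_zero]
  rw [div_eq_mul_inv, map_mul, ← MulChar.inv_apply', mul_assoc]
  congr 3
  field_simp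
  ring

variable [IsDomain R]

lemma gaussSum_mul_inv_apply {χ : MulChar F R} (hχ : χ ≠ 1) (ψ : AddChar F R) (a : F) :
    gaussSum χ ψ * χ⁻¹ a = ∑ m, χ m * ψ (m * a) := by
  rcases eq_or_ne a 0 with rfl | ha
  · simp [MulChar.map_zero, MulChar.sum_eq_zero_of_ne_one hχ]
  have hcancel : χ⁻¹ a * χ a = 1 := by
    rw [← MulChar.mul_apply, inv_mul_cancel, MulChar.one_apply ha.isUnit]
  rw [← gaussSum_mulShift χ ψ (Units.mk0 a ha), Units.val_mk0, mul_comm, ← mul_assoc, hcancel,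
    one_mul, gaussSum]
  simp only [AddChar.mulShift_apply, mul_comm a]

lemma gaussSum_mul_sum_mul_inv_apply {ι : Type*} [Fintype ι] {χ : MulChar F R} (hχ : χ ≠ 1)
    (ψ : AddChar F R) (f : ι → R) (g : ι → F) :
    gaussSum χ ψ * ∑ i, f i * χ⁻¹ (g i) = ∑ m, χ m * ∑ i, f i * ψ (m * g i) := by
  simp_rw [mul_sum]
  rw [sum_comm]
  refine sum_congr rfl fun i _ ↦ ?_
  rw [mul_left_comm, gaussSum_mul_inv_apply hχ, mul_sum]
  simp only [mul_left_comm]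

lemma gaussSum_mul_legendreSum {χ : MulChar F R} (hχ : χ ≠ 1) (ψ : AddChar F R)
    (A : MulChar F R) (c x : F) :
    gaussSum χ ψ * legendreSum A χ⁻¹ c x =
      ∑ r, χ r * (ψ (-r) * besselSum A ψ c (r * x)) := by
  rw [legendreSum, gaussSum_mul_sum_mul_inv_apply hχ]
  simp only [besselSum, mul_sum univ _ (ψ _)]
  refine sum_congr rfl fun r _ ↦ congrArg _ (sum_congr rfl fun t _ ↦ ?_)
  rw [mul_left_comm, ← AddChar.map_add_eq_mul]
  ring_nf

lemma gaussSum_mul_gaussSum_inv {χ : MulChar F R} (hχ : χ ≠ 1) {ψ : AddChar F R} (hψ : ψ ≠ 1) :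
    gaussSum χ ψ * gaussSum χ⁻¹ ψ = χ (-1) * Fintype.card F := by
  have hχneg : χ⁻¹ (-1) = χ (-1) := by rw [MulChar.inv_apply', inv_neg, inv_one]
  rw [← gaussSum_mul_gaussSum_eq_card hχ (.of_ne_one hψ), ← mul_gaussSum_inv_eq_gaussSum χ⁻¹ ψ,
    hχneg, mul_left_comm]

variable {φ : MulChar F R} {ψ : AddChar F R} (hφ : φ.IsQuadratic) (hφ₁ : φ ≠ 1) (hψ : ψ ≠ 1)

include hφ hφ₁ hψ

lemma sum_addChar_mul_sq {m : F} (hm : m ≠ 0) : ∑ t, ψ (m * t ^ 2) = gaussSum φ ψ * φ m := by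
  classical
  have hψ_sum : ∑ v, ψ (m * v) = 0 := by
    simpa [mul_comm, hm] using AddChar.sum_mulShift m (AddChar.IsPrimitive.of_ne_one hψ)
  have hφ_gauss := gaussSum_mul_inv_apply hφ₁ ψ m
  rw [hφ.inv] at hφ_gauss
  rw [sum_comp_sq hφ hφ₁ fun v ↦ ψ (m * v)]
  simp only [one_add_mul, sum_add_distrib, hψ_sum, zero_add, hφ_gauss]
  simp only [mul_comm m]

lemma sum_addChar_quadratic {m : F} (hm : m ≠ 0) (r : F) :
    ∑ t, ψ (m * t ^ 2 + r * t) = gaussSum φ ψ * φ m * ψ (-((r / 2) ^ 2 / m)) := by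
  have h2 : (2 : F) ≠ 0 := Ring.two_ne_zero (ringChar_ne_two_of_isQuadratic hφ hφ₁)
  rw [← sum_addChar_mul_sq hφ hφ₁ hψ hm, sum_mul, ← Equiv.sum_comp (Equiv.subRight (r / 2 / m))]
  refine sum_congr rfl fun t _ ↦ ?_
  rw [← AddChar.map_add_eq_mul, Equiv.subRight_apply]
  congr 1
  field_simp
  ring

lemma gaussSum_mul_besselSum_inv {χ : MulChar F R} (hχ : χ ≠ 1) (c r : F) :
    gaussSum χ ψ * besselSum χ⁻¹ ψ c r =
      gaussSum φ ψ * kloostermanSum (χ * φ) ψ (-c) (-(r / 2) ^ 2) := by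
  simp only [besselSum, mul_comm (χ⁻¹ _)]
  rw [gaussSum_mul_sum_mul_inv_apply hχ, kloostermanSum, mul_sum]
  refine sum_congr rfl fun m _ ↦ ?_
  rcases eq_or_ne m 0 with rfl | hm
  · simp [MulChar.map_zero]
  have hinner : ∑ t, ψ (r * t) * ψ (m * (t ^ 2 - c)) =
      ψ (-c * m) * ∑ t, ψ (m * t ^ 2 + r * t) := by
    rw [mul_sum]
    refine sum_congr rfl fun t _ ↦ ?_
    rw [← AddChar.map_add_eq_mul, ← AddChar.map_add_eq_mul]
    ring_nf
  rw [hinner, sum_addChar_quadratic hφ hφ₁ hψ hm, MulChar.mul_apply, AddChar.map_add_eq_mul,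
    neg_div]
  ring

/- The factor `x` stands beside `r` on one side and squared in the first parameter on the other, so
that `x = 0` is allowed. -/
lemma besselSum_symm {D : MulChar F R} (hD : D ≠ 1) (x : F) {r : F} (hr : r ≠ 0) :
    gaussSum D⁻¹ ψ * besselSum D ψ 1 (r * x) =
      D⁻¹ ((r / 2) ^ 2) * (gaussSum D ψ * besselSum D⁻¹ ψ (x ^ 2) r) := by
  have h2 : (2 : F) ≠ 0 := Ring.two_ne_zero (ringChar_ne_two_of_isQuadratic hφ hφ₁)
  have hr2 : r / 2 ≠ 0 := div_ne_zero hr h2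
  have hleft := gaussSum_mul_besselSum_inv hφ hφ₁ hψ (inv_ne_one.mpr hD) 1 (r * x)
  have hparam : -(r * x / 2) ^ 2 = -x ^ 2 * (r / 2) ^ 2 := by ring
  rw [inv_inv, hparam, kloostermanSum_mul_right _ _ _ _ (pow_ne_zero 2 hr2), MulChar.mul_apply,
    apply_sq_of_isQuadratic hφ hr2, mul_inv, inv_inv, hφ.inv, neg_one_mul] at hleft
  rw [hleft, gaussSum_mul_besselSum_inv hφ hφ₁ hψ hD]
  ring

lemma legendreSum_symm {D : MulChar F R} (hD : D ≠ 1) (hDφ : D ^ 2 * φ ≠ 1) (x : F) :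
    gaussSum D⁻¹ ψ * (gaussSum (D ^ 2 * φ) ψ * legendreSum D (D ^ 2 * φ)⁻¹ 1 x) =
      D 4 * (gaussSum D ψ * (gaussSum φ ψ * legendreSum D⁻¹ φ (x ^ 2) 1)) := by
  have hright := gaussSum_mul_legendreSum hφ₁ ψ D⁻¹ (x ^ 2) 1
  simp only [hφ.inv, mul_one] at hright
  rw [gaussSum_mul_legendreSum hDφ, hright, mul_sum, mul_sum, mul_sum]
  refine sum_congr rfl fun r _ ↦ ?_
  rcases eq_or_ne r 0 with rfl | hr
  · simp [MulChar.map_zero]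
  have hfactor : (D ^ 2 * φ) r * D⁻¹ ((r / 2) ^ 2) = D 4 * φ r := by
    rw [MulChar.mul_apply, MulChar.pow_apply' D two_ne_zero, MulChar.inv_apply', ← map_pow,
      mul_right_comm, ← map_mul, div_pow, inv_div, mul_div_cancel₀ _ (pow_ne_zero 2 hr)]
    norm_num
  linear_combination (D ^ 2 * φ) r * ψ (-r) * besselSum_symm hφ hφ₁ hψ hD x hr +
    ψ (-r) * gaussSum D ψ * besselSum D⁻¹ ψ (x ^ 2) r * hfactor

end CharacterSums

section Reduction

variable {F : Type} [Field F] [Fintype F] {A D φ : MulChar F ℂ} {ψ : AddChar F ℂ}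

lemma legendreSum_eq_mul_legendreSum (hφ : φ.IsQuadratic) (hφ₁ : φ ≠ 1) (hψ : ψ ≠ 1) (hD : D ≠ 1)
    (hDφ : D ^ 2 * φ ≠ 1) (x : F) :
    legendreSum D (D ^ 2 * φ)⁻¹ 1 x =
      D (-4) * (gaussSum D ψ ^ 2 * gaussSum φ ψ / gaussSum (D ^ 2 * φ) ψ) / Fintype.card F *
        legendreSum D⁻¹ φ (x ^ 2) 1 := by
  have hcard : (Fintype.card F : ℂ) ≠ 0 := Nat.cast_ne_zero.mpr Fintype.card_ne_zero
  have hψ' := AddChar.IsPrimitive.of_ne_one hψ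
  have hG : gaussSum D⁻¹ ψ ≠ 0 := gaussSum_ne_zero_of_nontrivial hcard (inv_ne_one.mpr hD) hψ'
  have hGφ : gaussSum (D ^ 2 * φ) ψ ≠ 0 := gaussSum_ne_zero_of_nontrivial hcard hDφ hψ'
  have hD4 : D (-4) = D 4 * D (-1) := by rw [← map_mul]; norm_num
  have hDneg : D (-1) * D (-1) = 1 := by rw [← map_mul]; norm_num
  have hprod := gaussSum_mul_gaussSum_inv hD hψ
  refine mul_left_cancel₀ (mul_ne_zero hG hGφ) ?_
  rw [mul_assoc, legendreSum_symm hφ hφ₁ hψ hD hDφ, hD4]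
  field_simp
  linear_combination D 4 * gaussSum D ψ * gaussSum φ ψ * legendreSum D⁻¹ φ (x ^ 2) 1 *
    (-D (-1) * hprod - (Fintype.card F : ℂ) * hDneg)

lemma hKatz_eq_legendreSum [DecidableEq F] (hA : (A ^ 2).IsQuadratic) (h2 : (2 : F) ≠ 0)
    {j : F} (hj : j ≠ 0) :
    hKatz A D j = (A ^ 2) (2 * j) * D⁻¹ ((4 * j) ^ 2) *
      legendreSum D (D ^ 2 * A ^ 2)⁻¹ 1 ((j + j⁻¹) / 2) := by
  have hχ : D⁻¹ ^ 2 * A ^ 2 = (D ^ 2 * A ^ 2)⁻¹ := by rw [mul_inv, inv_pow, hA.inv]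
  have hconst : D 4⁻¹ * (D ^ 2 * A ^ 2)⁻¹ (2 * j) = (A ^ 2) (2 * j) * D⁻¹ ((4 * j) ^ 2) := by
    rw [inv_sq_mul_apply_of_isQuadratic hA, ← MulChar.inv_apply', ← mul_assoc, ← map_mul, mul_comm]
    ring_nf
  rw [hKatz, sum_filter_of_ne fun x _ ↦ mt <| by rintro rfl; simp [MulChar.map_zero],
    sum_eq_add_sum_cayley h2 _ (by simp [MulChar.map_zero]), sub_self, MulChar.map_zero,
    mul_zero, zero_mul, zero_add, legendreSum, mul_sum]
  refine sum_congr rfl fun t _ ↦ ?_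
  rcases eq_or_ne (t + 1) 0 with ht | ht
  · have ht2 : t ^ 2 - 1 = 0 := by linear_combination (t - 1) * ht
    simp [ht, ht2, MulChar.map_zero]
  have hx_sub : 1 - (t - 1) / (t + 1) = 2 / (t + 1) := by
    field_simp
    ring
  have hx : (t - 1) / (t + 1) = (2 / (t + 1)) ^ 2 * (4⁻¹ * (t ^ 2 - 1)) := by
    rw [show (4 : F) = 2 ^ 2 by norm_num]
    field_simp
    ring
  have hlin : (t - 1) / (t + 1) * (j + 1) ^ 2 + (j - 1) ^ 2 =
      2 / (t + 1) * (2 * j * ((j + j⁻¹) / 2 * t - 1)) := by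
    field_simp
    ring
  rw [hχ, hlin, hx_sub, hx, apply_sq_mul_mul_inv_apply_of_isQuadratic hA (div_ne_zero h2 ht),
    map_mul, map_mul, ← hconst]
  ring

lemma hyp2F1_eq_sum_add_inv {a : F} (ha : a ≠ 0) :
    hyp2F1 D (D * A) A (a ^ 2) =
      (D * A)⁻¹ a / Fintype.card F * ∑ z, A z * D⁻¹ (a + a⁻¹ - (z + z⁻¹)) := by
  have hDA : (D * A)⁻¹ * A = D⁻¹ := by rw [mul_inv, inv_mul_cancel_right]
  rw [hyp2F1, hDA, MulChar.one_apply (pow_ne_zero 2 ha).isUnit, one_div_mul_eq_div,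
    div_mul_eq_mul_div, mul_sum, ← Equiv.sum_comp (Equiv.mulRight₀ a⁻¹ (inv_ne_zero ha))]
  congr 1
  refine sum_congr rfl fun z _ ↦ ?_
  rw [Equiv.mulRight₀_apply]
  rcases eq_or_ne z 0 with rfl | hz
  · simp [MulChar.map_zero]
  have hfactor : (z * a⁻¹ - 1) * (1 - a ^ 2 * (z * a⁻¹)) = z * (a + a⁻¹ - (z + z⁻¹)) := by
    field_simp
    ring
  have hDz : D z * D⁻¹ z = 1 := by
    rw [← MulChar.mul_apply, mul_inv_cancel, MulChar.one_apply hz.isUnit]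
  rw [mul_assoc, ← map_mul, hfactor, map_mul, map_mul, ← MulChar.inv_apply', MulChar.mul_apply]
  linear_combination (D * A)⁻¹ a * A z * D⁻¹ (a + a⁻¹ - (z + z⁻¹)) * hDz

lemma hyp2F1_eq_legendreSum (hA : (A ^ 2).IsQuadratic) (hA₁ : A ^ 2 ≠ 1) {j : F} (hj : j ≠ 0) :
    hyp2F1 D (D * A) A (j ^ 4) = (A ^ 2) (2 * j) * D⁻¹ (-4 * j ^ 2) / Fintype.card F *
      legendreSum D⁻¹ (A ^ 2) (((j + j⁻¹) / 2) ^ 2) 1 := by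
  have h2 : (2 : F) ≠ 0 := Ring.two_ne_zero (ringChar_ne_two_of_isQuadratic hA hA₁)
  have hDA : (D * A)⁻¹ (j ^ 2) = D⁻¹ (j ^ 2) * (A ^ 2) j := by
    rw [mul_inv, MulChar.mul_apply, map_pow A⁻¹, ← MulChar.pow_apply' A⁻¹ two_ne_zero, inv_pow,
      hA.inv]
  have hquad (u : F) : j ^ 2 + (j ^ 2)⁻¹ - (4 * u ^ 2 - 2) =
      -4 * (u ^ 2 - ((j + j⁻¹) / 2) ^ 2) := by
    field_simp
    ring
  rw [show j ^ 4 = (j ^ 2) ^ 2 by ring, hyp2F1_eq_sum_add_inv (pow_ne_zero 2 hj), hDA,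
    sum_apply_mul_comp_add_inv_of_sq hA hA₁ fun x ↦ D⁻¹ (j ^ 2 + (j ^ 2)⁻¹ - x)]
  simp only [hquad, map_mul D⁻¹, map_mul (A ^ 2), legendreSum, one_mul, mul_left_comm _ (D⁻¹ (-4)),
    ← mul_sum, mul_comm (D⁻¹ (_ - _))]
  ring

end Reduction

/-- `h(D,j)` as a hypergeometric sum, for `D ∉ {ε, A₄, A̅₄}` and `j ≠ 0`. -/
theorem h_eq_hyp2F1
    (F : Type) [Field F] [Fintype F] [DecidableEq F]
    (hq : Fintype.card F % 4 = 1)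
    (ψ : AddChar F ℂ) (hψ : ψ ≠ 1)
    (A₄ : MulChar F ℂ) (hA₄ : orderOf A₄ = 4)
    (D : MulChar F ℂ) (hD1 : D ≠ 1) (hD2 : D ≠ A₄) (hD3 : D ≠ A₄⁻¹)
    (j : F) (hj : j ≠ 0) :
    hKatz A₄ D j =
      gaussSum D ψ ^ 2 * gaussSum (A₄ ^ 2) ψ / gaussSum (D ^ 2 * A₄ ^ 2) ψ *
        hyp2F1 D (D * A₄) A₄ (j ^ 4) := by
  have hφ₁ : A₄ ^ 2 ≠ 1 := pow_ne_one_of_lt_orderOf two_ne_zero (by omega)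
  have hφ : (A₄ ^ 2).IsQuadratic := MulChar.isQuadratic_iff_sq_eq_one.mpr <| by
    rw [← pow_mul, ← orderOf_dvd_iff_pow_eq_one, hA₄]
  have hDφ : D ^ 2 * A₄ ^ 2 ≠ 1 := sq_mul_sq_ne_one hφ hφ₁ hD2 hD3
  have h2 : (2 : F) ≠ 0 := Ring.two_ne_zero (ringChar_ne_two_of_isQuadratic hφ hφ₁)
  have hconst : D⁻¹ ((4 * j) ^ 2) * D (-4) = D⁻¹ (-4 * j ^ 2) := by
    rw [MulChar.inv_apply', MulChar.inv_apply', ← map_mul]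
    have h4 : (4 : F) ≠ 0 := by rw [show (4 : F) = 2 ^ 2 by norm_num]; exact pow_ne_zero 2 h2
    congr 1
    field_simp
  rw [hKatz_eq_legendreSum hφ h2 hj, hyp2F1_eq_legendreSum hφ hφ₁ hj,
    legendreSum_eq_mul_legendreSum hφ hφ₁ hψ hD1 hDφ, ← hconst]
  ring
end

section
/- For every multiplicative character D of F_q and every z ∈ F_q* with z ∉ {1, −1}, one has the quadratic transformation ₂F₁(D, DA₄; A₄ | z⁴) = D̄⁴(z−1) · ₂F₁(D, D²φ; Dφ | −((z+1)/(z−1))²). -/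
/-!
Both sides are sums of a character against `D⁻¹` of a rational function of the summation variable.
Put `φ = A₄ ^ 2`. On the left, `(y - 1) * (1 - z ^ 4 * y) / y` becomes
`1 + z ^ 4 - z ^ 2 * (w + w⁻¹)` under `y = w / z ^ 2`; on the right, `u = y⁻¹` and then
`u = z * v / (z - 1) ^ 2` lead to `1 + z ^ 4 - z ^ 2 * ((v + 2) ^ 2 - 2)`. So it is enough that
`∑ w, A₄ w * g (w + w⁻¹) = ∑ v, φ v * g ((v + 2) ^ 2 - 2)` for every function `g`.

On nonsquares `A₄ w⁻¹ = -A₄ w`, so only the `w = a ^ 2` contribute on the left, and twice the left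
side is `∑ a, φ a * g ((a + a⁻¹) ^ 2 - 2)`. For every `f`,
`∑ a, φ a * f (a + a⁻¹) = ∑ c, (φ (c - 2) + φ (c + 2)) * f c`, and if `f` is even the two terms
contribute equally, because `φ (-1) = 1`.
-/

open Finset

section OrderTwo

variable {F R : Type*} [Field F] [CommRing R]

lemma ringChar_ne_two_of_even_orderOf [Finite F] {χ : MulChar F R} (hχ : Even (orderOf χ)) :
    ringChar F ≠ 2 := by
  have := Fintype.ofFinite F
  intro hF
  have hdvd : 2 ∣ Fintype.card F - 1 := hχ.two_dvd.trans χ.orderOf_dvd_card_sub_one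
  have heven : Fintype.card F % 2 = 0 := FiniteField.even_card_of_char_two hF
  have hone : 1 < Fintype.card F := Fintype.one_lt_card
  lia

variable [IsDomain R] {η : MulChar F R}

lemma apply_generator_of_orderOf_eq_two (hη : orderOf η = 2) {g : Fˣ}
    (hg : ∀ x, x ∈ Subgroup.zpowers g) : η g = -1 := by
  have hsq : η g ^ 2 = 1 := by
    rw [← MulChar.pow_apply_coe, ← hη, pow_orderOf_eq_one, MulChar.one_apply_coe]
  refine (sq_eq_one_iff.1 hsq).resolve_left fun h => ?_
  have hone : η = 1 := (MulChar.eq_iff hg η 1).2 (by rw [h, MulChar.one_apply_coe])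
  simp [hone] at hη

lemma two_ne_zero_of_orderOf_eq_two [Finite F] (hη : orderOf η = 2) : (2 : R) ≠ 0 := by
  intro htwo
  obtain ⟨g, hg⟩ := IsCyclic.exists_generator (α := Fˣ)
  have hone : η = 1 := (MulChar.eq_iff hg η 1).2 <| by
    rw [apply_generator_of_orderOf_eq_two hη hg, MulChar.one_apply_coe, neg_eq_iff_add_eq_zero,
      one_add_one_eq_two, htwo]
  simp [hone] at hη

variable [Fintype F]

lemma orderOf_quadraticChar [DecidableEq F] (hF : ringChar F ≠ 2) :
    orderOf (quadraticChar F) = 2 :=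
  orderOf_eq_prime (quadraticChar_isQuadratic F).sq_eq_one (quadraticChar_ne_one hF)

lemma quadraticChar_ringHomComp_eq [DecidableEq F] (hη : orderOf η = 2) :
    (quadraticChar F).ringHomComp (Int.castRingHom R) = η := by
  obtain ⟨g, hg⟩ := IsCyclic.exists_generator (α := Fˣ)
  have hF : ringChar F ≠ 2 := ringChar_ne_two_of_even_orderOf (hη ▸ even_two)
  rw [MulChar.eq_iff hg, MulChar.ringHomComp_apply,
    apply_generator_of_orderOf_eq_two (orderOf_quadraticChar hF) hg,
    apply_generator_of_orderOf_eq_two hη hg, map_neg, map_one]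

lemma card_filter_sq_eq [DecidableEq F] (hη : orderOf η = 2) (c : F) :
    (#{x | x ^ 2 = c} : R) = η c + 1 := by
  have hF : ringChar F ≠ 2 := ringChar_ne_two_of_even_orderOf (hη ▸ even_two)
  have hcard : (#{x | x ^ 2 = c} : ℤ) = quadraticChar F c + 1 := by
    simpa only [Set.toFinset_ofPred] using quadraticChar_card_sqrts hF c
  rw [← quadraticChar_ringHomComp_eq hη, MulChar.ringHomComp_apply, eq_intCast]
  exact_mod_cast congrArg (Int.cast : ℤ → R) hcard

lemma card_filter_quadratic_eq_zero [DecidableEq F] (hη : orderOf η = 2) {a : F} (ha : a ≠ 0)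
    (b c : F) : (#{x | a * (x * x) + b * x + c = 0} : R) = η (discrim a b c) + 1 := by
  have : NeZero (2 : F) :=
    ⟨Ring.two_ne_zero (ringChar_ne_two_of_even_orderOf (hη ▸ even_two))⟩
  have h2a : 2 * a ≠ 0 := mul_ne_zero two_ne_zero ha
  rw [← card_filter_sq_eq hη, card_equiv ((Equiv.mulLeft₀ _ h2a).trans (Equiv.addRight b))]
  intro x
  simp [quadratic_eq_zero_iff_discrim_eq_sq ha, eq_comm]

lemma sum_comp_sq_s10 (hη : orderOf η = 2) (f : F → R) :
    ∑ x, f (x ^ 2) = ∑ c, (η c + 1) * f c := by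
  classical
  simp_rw [← sum_fiberwise' univ (fun x : F => x ^ 2) f, sum_const, nsmul_eq_mul,
    card_filter_sq_eq hη]

lemma sum_comp_add_inv [DecidableEq F] (hη : orderOf η = 2) (f : F → R) :
    ∑ x with x ≠ 0, f (x + x⁻¹) = ∑ c, (η (c ^ 2 - 4) + 1) * f c := by
  rw [← sum_fiberwise' _ (fun x : F => x + x⁻¹) f]
  refine sum_congr rfl fun c _ => ?_
  have hfiber : {x ∈ ({x | x ≠ 0} : Finset F) | x + x⁻¹ = c} =
      ({x | 1 * (x * x) + -c * x + 1 = 0} : Finset F) := by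
    ext x
    rcases eq_or_ne x 0 with rfl | hx
    · simp
    · simp only [mem_filter, mem_univ, hx, ne_eq, not_false_eq_true, true_and]
      field_simp
      grind
  have hdiscrim : discrim 1 (-c) 1 = c ^ 2 - 4 := by rw [discrim]; ring
  rw [sum_const, nsmul_eq_mul, hfiber, card_filter_quadratic_eq_zero hη one_ne_zero, hdiscrim]

/- Evaluate `∑ f (x ^ 2 + (x ^ 2)⁻¹)` over `x ≠ 0` in two ways: through `x ^ 2`, or through
`x + x⁻¹`, since `x ^ 2 + (x ^ 2)⁻¹ = (x + x⁻¹) ^ 2 - 2`. -/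
lemma sum_add_one_mul_comp_add_inv [DecidableEq F] (hη : orderOf η = 2) (f : F → R) :
    ∑ x with x ≠ 0, (η x + 1) * f (x + x⁻¹) =
      ∑ c, (η (c - 2) + 1) * (η (c + 2) + 1) * f c := by
  calc ∑ x with x ≠ 0, (η x + 1) * f (x + x⁻¹)
      = ∑ x with x ≠ 0, f (x ^ 2 + (x ^ 2)⁻¹) := by
        simpa [sum_filter] using
          (sum_comp_sq_s10 hη fun x => if x ≠ 0 then f (x + x⁻¹) else 0).symm
    _ = ∑ x with x ≠ 0, f ((x + x⁻¹) ^ 2 - 2) := by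
        refine sum_congr rfl fun x hx => ?_
        have hx : x ≠ 0 := (mem_filter_univ x).1 hx
        congr 1
        field_simp
        ring
    _ = ∑ c, (η (c ^ 2 - 4) + 1) * f (c ^ 2 - 2) :=
        sum_comp_add_inv hη fun c => f (c ^ 2 - 2)
    _ = ∑ d, (η d + 1) * ((η (d - 4) + 1) * f (d - 2)) :=
        sum_comp_sq_s10 hη fun d => (η (d - 4) + 1) * f (d - 2)
    _ = ∑ c, (η (c - 2) + 1) * (η (c + 2) + 1) * f c := by
        refine Fintype.sum_equiv (Equiv.subRight 2) _ _ fun d => ?_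
        rw [Equiv.subRight_apply, sub_add_cancel, sub_sub, two_add_two_eq_four]
        ring

lemma sum_mul_comp_add_inv (hη : orderOf η = 2) (f : F → R) :
    ∑ x, η x * f (x + x⁻¹) = ∑ c, (η (c - 2) + η (c + 2)) * f c := by
  classical
  have hnonzero : ∑ x, η x * f (x + x⁻¹) = ∑ x with x ≠ 0, η x * f (x + x⁻¹) := by
    rw [sum_filter_of_ne]
    rintro x - h rfl
    simp [MulChar.map_zero] at h
  have hfactor (c : F) : η (c ^ 2 - 4) = η (c - 2) * η (c + 2) := by
    rw [← map_mul]
    ring_nf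
  calc ∑ x, η x * f (x + x⁻¹)
      = ∑ x with x ≠ 0, (η x + 1) * f (x + x⁻¹) - ∑ x with x ≠ 0, f (x + x⁻¹) := by
        rw [hnonzero, ← sum_sub_distrib]
        exact sum_congr rfl fun x _ => by ring
    _ = ∑ c, (η (c - 2) + η (c + 2)) * f c := by
        rw [sum_add_one_mul_comp_add_inv hη, sum_comp_add_inv hη, ← sum_sub_distrib]
        exact sum_congr rfl fun c _ => by rw [hfactor]; ring

end OrderTwo

section OrderFour

lemma orderOf_sq_of_orderOf_eq_four {G : Type*} [Monoid G] {x : G} (hx : orderOf x = 4) :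
    orderOf (x ^ 2) = 2 := by
  rw [orderOf_pow_of_dvd two_ne_zero (by norm_num [hx]), hx]

lemma sq_apply_div_sq {F R : Type*} [Field F] [CommRing R] {χ : MulChar F R} (hχ : χ ^ 4 = 1)
    {x y : F} (hx : x ≠ 0) (hy : y ≠ 0) : (χ ^ 2) (x / y ^ 2) = χ⁻¹ (x ^ 2) := by
  have hfourth : χ ((x / y) ^ 4) = 1 := by
    rw [map_pow, ← MulChar.pow_apply' _ four_ne_zero, hχ,
      MulChar.one_apply (div_ne_zero hx hy).isUnit]
  have harg : (x / y ^ 2) ^ 2 = (x ^ 2)⁻¹ * (x / y) ^ 4 := by field_simp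
  rw [MulChar.pow_apply' _ two_ne_zero, ← map_pow, harg, map_mul, hfourth, mul_one,
    MulChar.inv_apply']

variable {F R : Type*} [Field F] [Fintype F] [CommRing R]

lemma sum_add_mul_comp_sq {η : MulChar F R} (hη : η (-1) = 1) (t : F) (g : F → R) :
    ∑ c, (η (c - t) + η (c + t)) * g (c ^ 2) = 2 * ∑ v, η v * g ((v + t) ^ 2) := by
  have hshift : ∑ c, η (c - t) * g (c ^ 2) = ∑ v, η v * g ((v + t) ^ 2) :=
    Fintype.sum_equiv (Equiv.subRight t) _ _ fun c => by
      rw [Equiv.subRight_apply, sub_add_cancel]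
  have hreflect : ∑ c, η (c + t) * g (c ^ 2) = ∑ c, η (c - t) * g (c ^ 2) :=
    Fintype.sum_equiv (Equiv.neg F) _ _ fun c => by
      rw [Equiv.neg_apply, neg_sq, ← neg_add', ← neg_one_mul, map_mul, hη, one_mul]
  simp_rw [add_mul, sum_add_distrib, hreflect, hshift, two_mul]

variable [IsDomain R] {χ : MulChar F R}

lemma two_mul_sum_mul_comp_add_inv (hχ : orderOf χ = 4) (g : F → R) :
    2 * ∑ w, χ w * g (w + w⁻¹) = ∑ a, (χ ^ 2) a * g ((a + a⁻¹) ^ 2 - 2) := by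
  have hcube : χ ^ 2 * χ = χ⁻¹ := by
    rw [eq_inv_iff_mul_eq_one, mul_assoc, ← sq, ← pow_add, ← pow_orderOf_eq_one χ, hχ]
  have hinv : ∑ w, χ⁻¹ w * g (w + w⁻¹) = ∑ w, χ w * g (w + w⁻¹) :=
    Fintype.sum_equiv (Equiv.inv F) _ _ fun w => by
      rw [Equiv.inv_apply, inv_inv, add_comm, MulChar.inv_apply']
  calc 2 * ∑ w, χ w * g (w + w⁻¹)
      = ∑ w, ((χ ^ 2) w + 1) * (χ w * g (w + w⁻¹)) := by
        simp_rw [add_mul, one_mul, sum_add_distrib, ← mul_assoc, ← MulChar.mul_apply, hcube, hinv,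
          two_mul]
    _ = ∑ a, χ (a ^ 2) * g (a ^ 2 + (a ^ 2)⁻¹) :=
        (sum_comp_sq_s10 (orderOf_sq_of_orderOf_eq_four hχ) fun w => χ w * g (w + w⁻¹)).symm
    _ = ∑ a, (χ ^ 2) a * g ((a + a⁻¹) ^ 2 - 2) := by
        refine sum_congr rfl fun a _ => ?_
        rcases eq_or_ne a 0 with rfl | ha
        · simp [MulChar.map_zero]
        · rw [map_pow, MulChar.pow_apply' _ two_ne_zero]
          congr 2
          field_simp
          ring

lemma sum_mul_comp_add_inv_of_orderOf_eq_four (hχ : orderOf χ = 4) (g : F → R) :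
    ∑ w, χ w * g (w + w⁻¹) = ∑ v, (χ ^ 2) v * g ((v + 2) ^ 2 - 2) := by
  have hsq : orderOf (χ ^ 2) = 2 := orderOf_sq_of_orderOf_eq_four hχ
  have hneg : (χ ^ 2) (-1) = 1 := by
    rw [MulChar.pow_apply' _ two_ne_zero, ← map_pow, neg_one_sq, map_one]
  refine mul_left_cancel₀ (two_ne_zero_of_orderOf_eq_two hsq) ?_
  rw [two_mul_sum_mul_comp_add_inv hχ, sum_mul_comp_add_inv hsq fun c => g (c ^ 2 - 2),
    sum_add_mul_comp_sq hneg 2 fun s => g (s - 2)]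

end OrderFour

section Hypergeometric

variable {F : Type} [Field F] [Fintype F]

lemma hyp2F1_mul_self_sq (C D : MulChar F ℂ) (t : F) :
    hyp2F1 D (D * C) C (t ^ 2) = C⁻¹ t / Fintype.card F *
      ∑ w, C w * D⁻¹ (1 + t ^ 2 - t * (w + w⁻¹)) := by
  rcases eq_or_ne t 0 with rfl | ht
  · simp [hyp2F1, MulChar.map_zero]
  have hD : (D * C)⁻¹ * C = D⁻¹ := by
    rw [inv_mul_eq_iff_eq_mul, mul_right_comm, mul_inv_cancel, one_mul]
  have hC : C⁻¹ t * C t = 1 := by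
    rw [← MulChar.mul_apply, inv_mul_cancel, MulChar.one_apply ht.isUnit]
  rw [hyp2F1, hD, MulChar.one_apply (pow_ne_zero 2 ht).isUnit, div_mul_eq_mul_div,
    div_mul_eq_mul_div, one_mul, mul_sum]
  congr 1
  refine Fintype.sum_equiv (Equiv.mulRight₀ t ht) _ _ fun y => ?_
  rw [Equiv.mulRight₀_apply]
  rcases eq_or_ne y 0 with rfl | hy
  · simp [MulChar.map_zero]
  have harg : 1 + t ^ 2 - t * (y * t + (y * t)⁻¹) = y⁻¹ * (y - 1) * (1 - t ^ 2 * y) := by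
    field_simp
    ring
  rw [harg, map_mul C, map_mul D⁻¹, map_mul D⁻¹, MulChar.mul_apply, MulChar.inv_apply' D y⁻¹,
    inv_inv]
  linear_combination -D y * C y * D⁻¹ (y - 1) * D⁻¹ (1 - t ^ 2 * y) * hC

lemma hyp2F1_sq_mul_mul (C D : MulChar F ℂ) (x : F) :
    hyp2F1 D (D ^ 2 * C) (D * C) x = (1 : MulChar F ℂ) x / Fintype.card F *
      ∑ u, C⁻¹ u * D⁻¹ ((1 - u) * (u - x)) := by
  have hD : (D ^ 2 * C)⁻¹ * (D * C) = D⁻¹ := by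
    rw [inv_mul_eq_iff_eq_mul, mul_right_comm, sq, mul_inv_cancel_right]
  rw [hyp2F1, hD]
  congr 1
  refine Fintype.sum_equiv (Equiv.inv F) _ _ fun y => ?_
  rw [Equiv.inv_apply]
  rcases eq_or_ne y 0 with rfl | hy
  · simp [MulChar.map_zero]
  have harg : (1 - y⁻¹) * (y⁻¹ - x) = y⁻¹ ^ 2 * (y - 1) * (1 - x * y) := by field_simp
  rw [harg, map_mul D⁻¹, map_mul D⁻¹, map_pow, MulChar.mul_apply, MulChar.pow_apply' D two_ne_zero,
    MulChar.inv_apply' D y⁻¹, MulChar.inv_apply' C, inv_inv]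
  ring

lemma inv_pow_four_mul_hyp2F1_neg_div_sq (C D : MulChar F ℂ) {z : F} (hz0 : z ≠ 0)
    (hz1 : z ≠ 1) (hz2 : z ≠ -1) :
    (D⁻¹ ^ 4) (z - 1) * hyp2F1 D (D ^ 2 * C) (D * C) (-((z + 1) / (z - 1)) ^ 2) =
      C⁻¹ (z / (z - 1) ^ 2) / Fintype.card F *
        ∑ v, C⁻¹ v * D⁻¹ (1 + z ^ 4 - z ^ 2 * ((v + 2) ^ 2 - 2)) := by
  have hm : z - 1 ≠ 0 := sub_ne_zero.2 hz1
  have hp : z + 1 ≠ 0 := fun h => hz2 (eq_neg_of_add_eq_zero_left h)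
  have hx : -((z + 1) / (z - 1)) ^ 2 ≠ 0 := neg_ne_zero.2 (pow_ne_zero 2 (div_ne_zero hp hm))
  have hscale : z / (z - 1) ^ 2 ≠ 0 := div_ne_zero hz0 (pow_ne_zero 2 hm)
  rw [hyp2F1_sq_mul_mul, MulChar.one_apply hx.isUnit, div_mul_eq_mul_div, div_mul_eq_mul_div,
    one_mul, mul_div_assoc', mul_sum, mul_sum]
  congr 1
  symm
  refine Fintype.sum_equiv (Equiv.mulLeft₀ _ hscale) _ _ fun v => ?_
  have harg : 1 + z ^ 4 - z ^ 2 * ((v + 2) ^ 2 - 2) = (z - 1) ^ 4 *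
      ((1 - z / (z - 1) ^ 2 * v) * (z / (z - 1) ^ 2 * v - -((z + 1) / (z - 1)) ^ 2)) := by
    field_simp
    ring
  rw [Equiv.mulLeft₀_apply, harg, map_mul C⁻¹, map_mul D⁻¹ ((z - 1) ^ 4), map_pow,
    MulChar.pow_apply' _ four_ne_zero]
  ring

end Hypergeometric

/-- The quadratic transformation for the finite field `₂F₁`. -/
theorem hyp2F1_quadratic_transformation
    (F : Type) [Field F] [Fintype F] [DecidableEq F]
    (hq : Fintype.card F % 4 = 1)
    (A₄ : MulChar F ℂ) (hA₄ : orderOf A₄ = 4)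
    (D : MulChar F ℂ) (z : F) (hz0 : z ≠ 0) (hz1 : z ≠ 1) (hz2 : z ≠ -1) :
    hyp2F1 D (D * A₄) A₄ (z ^ 4) =
      (D⁻¹ ^ 4) (z - 1) *
        hyp2F1 D (D ^ 2 * A₄ ^ 2) (D * A₄ ^ 2) (-((z + 1) / (z - 1)) ^ 2) := by
  have hfour : A₄ ^ 4 = 1 := hA₄ ▸ pow_orderOf_eq_one A₄
  have hinv : (A₄ ^ 2)⁻¹ = A₄ ^ 2 := by rw [inv_eq_iff_mul_eq_one, ← pow_add, hfour]
  calc hyp2F1 D (D * A₄) A₄ (z ^ 4)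
      = A₄⁻¹ (z ^ 2) / Fintype.card F *
          ∑ w, A₄ w * D⁻¹ (1 + z ^ 4 - z ^ 2 * (w + w⁻¹)) := by
        rw [show z ^ 4 = (z ^ 2) ^ 2 by ring, hyp2F1_mul_self_sq]
    _ = A₄⁻¹ (z ^ 2) / Fintype.card F *
          ∑ v, (A₄ ^ 2) v * D⁻¹ (1 + z ^ 4 - z ^ 2 * ((v + 2) ^ 2 - 2)) := by
        rw [sum_mul_comp_add_inv_of_orderOf_eq_four hA₄ fun s => D⁻¹ (1 + z ^ 4 - z ^ 2 * s)]
    _ = (D⁻¹ ^ 4) (z - 1) *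
          hyp2F1 D (D ^ 2 * A₄ ^ 2) (D * A₄ ^ 2) (-((z + 1) / (z - 1)) ^ 2) := by
        rw [inv_pow_four_mul_hyp2F1_neg_div_sq _ _ hz0 hz1 hz2, hinv,
          sq_apply_div_sq hfour hz0 (sub_ne_zero.2 hz1)]
end

section
/- Let λ₁ be a multiplicative character of F_q and set χ₁ = λ₁²φ. If χ₁ is not a fourth power (i.e., there is no multiplicative character ν₁ with χ₁ = ν₁⁴), then H(λ₁) = 0. -/
/-!
Write `χ = λ₁² φ` and `t = (j - 1) / (j + 1)`. For `j ≠ ±1` the points of the curve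
`x (j + 1)² + a (j - 1)² / x = 0` above `j` are `x = s t` with `s² = -a`, and there
`x - a / x = s (t + t⁻¹) = 2 s (j⁴ - 1) / (j² - 1)²`, so `φ (x - a / x) = φ (j⁴ - 1) φ (2 s)`.
For `j = ±1` there are no points and `φ (j⁴ - 1) = 0`. Hence
`H(λ₁) = (∑ j, χ j φ (j⁴ - 1)) (∑ s² = -a, φ (2 s))`. By duality of finite abelian groups, `χ` not
being a fourth power provides `u` with `u⁴ = 1` and `χ u ≠ 1`; replacing `j` by `u j` multiplies the
first factor by `χ u`, so that factor vanishes.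
-/

open Finset

section Duality

variable {M R : Type*} [CommMonoid M] [CommRing R]

theorem exists_eq_pow_iff_forall_apply_eq_one [Finite M] [Nontrivial R]
    [HasEnoughRootsOfUnity R (Monoid.exponent Mˣ)] (χ : MulChar M R) (n : ℕ) :
    (∃ ν : MulChar M R, χ = ν ^ n) ↔ ∀ u : Mˣ, u ^ n = 1 → χ u = 1 := by
  let nthPowers : Subgroup (MulChar M R) := (powMonoidHom n).range
  let annihilator : Subgroup Mˣ :=
    (MulChar.subgroupOrderIsoSubgroupMulChar M R).symm (OrderDual.toDual nthPowers)
  have mem_annihilator (u : Mˣ) : u ∈ annihilator ↔ u ^ n = 1 := by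
    have pow_apply (ν : MulChar M R) : (ν ^ n) u = ν ↑(u ^ n) := by
      rw [MulChar.pow_apply_coe, Units.val_pow_eq_pow_val, map_pow]
    simp only [annihilator, nthPowers, MulChar.mem_subgroupOrderIsoSubgroupMulChar_symm_iff,
      MonoidHom.mem_range, powMonoidHom_apply, forall_exists_index, forall_apply_eq_imp_iff,
      pow_apply]
    refine ⟨fun h ↦ ?_, fun h ν ↦ by rw [h, Units.val_one, map_one]⟩
    by_contra hu
    obtain ⟨ν, hν⟩ := MulChar.exists_apply_ne_one_of_hasEnoughRootsOfUnity M R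
      (mt Units.val_eq_one.mp hu)
    exact hν (h ν)
  calc (∃ ν : MulChar M R, χ = ν ^ n)
      ↔ χ ∈ nthPowers := exists_congr fun _ ↦ eq_comm
    _ ↔ χ ∈ (MulChar.subgroupOrderIsoSubgroupMulChar M R annihilator).ofDual := by
        rw [OrderIso.apply_symm_apply, OrderDual.ofDual_toDual]
    _ ↔ ∀ u : Mˣ, u ^ n = 1 → χ u = 1 := by
        simp only [MulChar.mem_subgroupOrderIsoSubgroupMulChar_iff, mem_annihilator]

theorem sum_mulChar_mul_eq_zero_of_invariant [Fintype M] [NoZeroDivisors R] {χ : MulChar M R}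
    {f : M → R} {u : Mˣ} (hf : ∀ x, f (u * x) = f x) (hu : χ u ≠ 1) :
    ∑ x, χ x * f x = 0 := by
  refine eq_zero_of_mul_eq_self_left hu ?_
  calc χ u * ∑ x, χ x * f x
      = ∑ x, χ (u * x) * f (u * x) := by simp only [mul_sum, map_mul, hf, mul_assoc]
    _ = ∑ x, χ x * f x := Equiv.sum_comp u.mulLeft fun x ↦ χ x * f x

theorem sum_mulChar_mul_comp_pow_eq_zero [Fintype M] [IsDomain R]
    [HasEnoughRootsOfUnity R (Monoid.exponent Mˣ)] {χ : MulChar M R} {n : ℕ}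
    (hχ : ∀ ν : MulChar M R, χ ≠ ν ^ n) (f : M → R) :
    ∑ x, χ x * f (x ^ n) = 0 := by
  obtain ⟨u, hu, hχu⟩ : ∃ u : Mˣ, u ^ n = 1 ∧ χ u ≠ 1 := by
    simpa using mt (exists_eq_pow_iff_forall_apply_eq_one χ n).mpr (not_exists.mpr hχ)
  refine sum_mulChar_mul_eq_zero_of_invariant (u := u) (fun x ↦ ?_) hχu
  rw [mul_pow, ← Units.val_pow_eq_pow_val, hu, Units.val_one, one_mul]

end Duality

theorem mulChar_apply_mul_pow_of_pow_eq_one {M R : Type*} [CommMonoid M] [CommMonoidWithZero R]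
    {φ : MulChar M R} {n : ℕ} (hφ : φ ^ n = 1) (b : M) {c : M} (hc : IsUnit c) :
    φ (b * c ^ n) = φ b := by
  obtain ⟨u, rfl⟩ := hc
  rw [map_mul, map_pow, ← MulChar.pow_apply_coe, hφ, MulChar.one_apply_coe, mul_one]

theorem sum_filter_pow_eq_mul_pow {K R : Type*} [CommGroupWithZero K] [Fintype K] [DecidableEq K]
    [AddCommMonoid R] (f : K → R) (n : ℕ) (b : K) {t : K} (ht : t ≠ 0) :
    ∑ x with x ^ n = b * t ^ n, f x = ∑ s with s ^ n = b, f (s * t) := by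
  rw [sum_filter, sum_filter, ← Equiv.sum_comp (Equiv.mulRight₀ t ht)]
  simp only [Equiv.mulRight₀_apply, mul_pow, mul_left_inj' (pow_ne_zero n ht)]

theorem add_one_ne_zero_and_sub_one_ne_zero {R : Type*} [CommRing R] {j : R} (hj : j ^ 2 ≠ 1) :
    j + 1 ≠ 0 ∧ j - 1 ≠ 0 := by
  have hmul : (j + 1) * (j - 1) ≠ 0 := by rwa [← sq_sub_sq, one_pow, sub_ne_zero]
  exact ⟨left_ne_zero_of_mul hmul, right_ne_zero_of_mul hmul⟩

section Curve

variable {K : Type*} [Field K]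

theorem sq_ne_one_of_mem_curve (h2 : (2 : K) ≠ 0) {a j x : K} (ha : a ≠ 0) (hx : x ≠ 0)
    (h : x * (j + 1) ^ 2 + a * (j - 1) ^ 2 / x = 0) : j ^ 2 ≠ 1 := by
  rw [Ne, sq_eq_one_iff]
  rintro (rfl | rfl)
  · simp [hx, h2, one_add_one_eq_two] at h
  · simp [hx, h2, ha, ← neg_add', one_add_one_eq_two] at h

theorem mem_curve_iff_sq_eq {a j x : K} (ha : a ≠ 0) (hj : j ^ 2 ≠ 1) :
    (x ≠ 0 ∧ x * (j + 1) ^ 2 + a * (j - 1) ^ 2 / x = 0) ↔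
      x ^ 2 = -a * ((j - 1) / (j + 1)) ^ 2 := by
  obtain ⟨hadd, hsub⟩ := add_one_ne_zero_and_sub_one_ne_zero hj
  have hx_of_sq (h : x ^ 2 = -a * ((j - 1) / (j + 1)) ^ 2) : x ≠ 0 := by
    rintro rfl
    simp [ha, hadd, hsub] at h
  rw [← and_iff_right_of_imp hx_of_sq]
  refine and_congr_right fun hx ↦ ?_
  field_simp
  rw [mul_zero, ← eq_neg_iff_add_eq_zero]

theorem sub_div_eq_of_sq_eq_neg {a j s : K} (ha : a ≠ 0) (hj : j ^ 2 ≠ 1) (hs : s ^ 2 = -a) :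
    s * ((j - 1) / (j + 1)) - a / (s * ((j - 1) / (j + 1))) =
      (j ^ 4 - 1) * (2 * s) * (j ^ 2 - 1)⁻¹ ^ 2 := by
  obtain ⟨hadd, hsub⟩ := add_one_ne_zero_and_sub_one_ne_zero hj
  have hs0 : s ≠ 0 := by
    rintro rfl
    exact ha (by simpa using hs.symm)
  have hfactor : j ^ 2 - 1 = (j + 1) * (j - 1) := by ring
  rw [hfactor, ← neg_eq_iff_eq_neg.mpr hs]
  field_simp
  ring

theorem sum_curve_fiber_mulChar [Fintype K] [DecidableEq K] {R : Type*} [CommSemiring R]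
    (h2 : (2 : K) ≠ 0) {φ : MulChar K R} (hφ : φ ^ 2 = 1) {a : K} (ha : a ≠ 0) (j : K) :
    ∑ x with x ≠ 0 ∧ x * (j + 1) ^ 2 + a * (j - 1) ^ 2 / x = 0, φ (x - a / x) =
      φ (j ^ 4 - 1) * ∑ s with s ^ 2 = -a, φ (2 * s) := by
  by_cases hj : j ^ 2 = 1
  · have hj4 : j ^ 4 - 1 = 0 := by linear_combination (j ^ 2 + 1) * hj
    rw [filter_false_of_mem fun x _ h ↦ sq_ne_one_of_mem_curve h2 ha h.1 h.2 hj, hj4,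
      MulChar.map_zero, zero_mul, sum_empty]
  obtain ⟨hadd, hsub⟩ := add_one_ne_zero_and_sub_one_ne_zero hj
  simp only [mem_curve_iff_sq_eq ha hj]
  rw [sum_filter_pow_eq_mul_pow _ 2 _ (div_ne_zero hsub hadd), mul_sum]
  refine sum_congr rfl fun s hs ↦ ?_
  rw [sub_div_eq_of_sq_eq_neg ha hj ((mem_filter_univ s).mp hs),
    mulChar_apply_mul_pow_of_pow_eq_one hφ _ (inv_ne_zero (sub_ne_zero.mpr hj)).isUnit, map_mul]

end Curve

theorem Hkatz_eq_sum_mul_sum_fiber {F : Type} [Field F] [Fintype F] [DecidableEq F]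
    (A₄ lam : MulChar F ℂ) (a : F) :
    Hkatz A₄ lam a = ∑ j, (lam ^ 2 * A₄ ^ 2) j *
      ∑ x with x ≠ 0 ∧ x * (j + 1) ^ 2 + a * (j - 1) ^ 2 / x = 0, (A₄ ^ 2) (x - a / x) := by
  rw [Hkatz, sum_filter, sum_product]
  refine sum_congr rfl fun j _ ↦ ?_
  rw [mul_sum, sum_filter]
  refine sum_congr rfl fun x _ ↦ ?_
  rcases eq_or_ne j 0 with rfl | hj
  · simp only [ne_eq, not_true_eq_false, false_and, MulChar.map_zero, zero_mul, ite_self]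
  · simp only [ne_eq, hj, not_false_eq_true, true_and]

theorem Hkatz_eq_sum_mul_sum {F : Type} [Field F] [Fintype F] [DecidableEq F]
    (h2 : (2 : F) ≠ 0) {A₄ : MulChar F ℂ} (hA₄ : A₄ ^ 4 = 1) {a : F} (ha : a ≠ 0)
    (lam : MulChar F ℂ) :
    Hkatz A₄ lam a =
      (∑ j, (lam ^ 2 * A₄ ^ 2) j * (A₄ ^ 2) (j ^ 4 - 1)) *
        ∑ s with s ^ 2 = -a, (A₄ ^ 2) (2 * s) := by
  have hφ : (A₄ ^ 2) ^ 2 = 1 := by rw [← pow_mul, hA₄]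
  simp only [Hkatz_eq_sum_mul_sum_fiber, sum_curve_fiber_mulChar h2 hφ ha, sum_mul, mul_assoc]

/-- If `χ₁ = λ₁²φ` is not a fourth power, then `H(λ₁) = 0`. -/
theorem H_eq_zero_of_not_fourth_power
    (F : Type) [Field F] [Fintype F] [DecidableEq F]
    (hq : Fintype.card F % 4 = 1)
    (A₄ : MulChar F ℂ) (hA₄ : orderOf A₄ = 4)
    (a : F) (ha : a ≠ 0)
    (lam : MulChar F ℂ)
    (hχ : ∀ ν : MulChar F ℂ, lam ^ 2 * A₄ ^ 2 ≠ ν ^ 4) :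
    Hkatz A₄ lam a = 0 := by
  have h2 : (2 : F) ≠ 0 := Ring.two_ne_zero fun hchar ↦ by
    have := FiniteField.even_card_of_char_two hchar
    omega
  have hA₄_pow : A₄ ^ 4 = 1 := hA₄ ▸ pow_orderOf_eq_one A₄
  rw [Hkatz_eq_sum_mul_sum h2 hA₄_pow ha,
    sum_mulChar_mul_comp_pow_eq_zero hχ fun y ↦ (A₄ ^ 2) (y - 1), zero_mul]
end
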